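/- arXiv:2509.07371 — 8 statements merged into one kernel-verified Lean document; each statement's English description precedes it below -/
import Mathlib

section
/- For the dispersion relation ω(k) = k·√((2+k²)/(1+k²)) one has deriv ω 0 = √2, and for every k ≠ 0 the derivative satisfies 0 < deriv ω k < √2. Consequently, for every k₀ > 0 the group velocity c_g = deriv ω k₀ satisfies c_g − j·(deriv ω 0) ≠ 0 for both j = 1 and j = −1. -/
noncomputable def qhat (k : ℝ) : ℝ := Real.sqrt ((2 + k ^ 2) / (1 + k ^ 2))

noncomputable def ω (k : ℝ) : ℝ := k * qhat k

theorem qhat_pos (k : ℝ) : 0 < qhat k := Real.sqrt_pos.2 (by positivity)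

theorem qhat_sq (k : ℝ) : qhat k ^ 2 = (2 + k ^ 2) / (1 + k ^ 2) :=
  Real.sq_sqrt (by positivity)

theorem qhat_lt_sqrt_two {k : ℝ} (hk : k ≠ 0) : qhat k < Real.sqrt 2 := by
  have : 0 < k ^ 2 := by positivity
  refine Real.sqrt_lt_sqrt (by positivity) ?_
  rw [div_lt_iff₀ (by positivity)]
  linarith

theorem hasDerivAt_qhat (k : ℝ) :
    HasDerivAt qhat (-k / ((1 + k ^ 2) ^ 2 * qhat k)) k := by
  have hden : 1 + k ^ 2 ≠ 0 := by positivity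
  have hq : Real.sqrt ((2 + k ^ 2) / (1 + k ^ 2)) ≠ 0 := (qhat_pos k).ne'
  have hr : HasDerivAt (fun x : ℝ => (2 + x ^ 2) / (1 + x ^ 2))
      (-(2 * k) / (1 + k ^ 2) ^ 2) k := by
    have hsq : HasDerivAt (fun x : ℝ => x ^ 2) (2 * k) k := by
      simpa using hasDerivAt_pow 2 k
    exact ((hsq.const_add 2).fun_div (hsq.const_add 1) hden).congr_deriv (by ring)
  refine (hr.sqrt (by positivity)).congr_deriv ?_
  unfold qhat
  field_simp

theorem hasDerivAt_ω (k : ℝ) :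
    HasDerivAt ω (qhat k - k ^ 2 / ((1 + k ^ 2) ^ 2 * qhat k)) k := by
  exact ((hasDerivAt_id' k).fun_mul (hasDerivAt_qhat k)).congr_deriv (by ring)

theorem deriv_ω_zero : deriv ω 0 = Real.sqrt 2 := by
  simp [(hasDerivAt_ω 0).deriv, qhat]

theorem deriv_ω_pos (k : ℝ) : 0 < deriv ω k := by
  have hq := qhat_pos k
  rw [(hasDerivAt_ω k).deriv, sub_pos, div_lt_iff₀ (by positivity)]
  have h : qhat k * ((1 + k ^ 2) ^ 2 * qhat k) = (2 + k ^ 2) * (1 + k ^ 2) := by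
    rw [show qhat k * ((1 + k ^ 2) ^ 2 * qhat k) = qhat k ^ 2 * (1 + k ^ 2) ^ 2 by ring, qhat_sq]
    field_simp
  rw [h]
  nlinarith [sq_nonneg k, sq_nonneg (k ^ 2)]

theorem deriv_ω_lt_sqrt_two {k : ℝ} (hk : k ≠ 0) : deriv ω k < Real.sqrt 2 := by
  have hq := qhat_pos k
  rw [(hasDerivAt_ω k).deriv]
  exact (sub_le_self _ (by positivity)).trans_lt (qhat_lt_sqrt_two hk)

theorem stmt1 :
    deriv ω 0 = Real.sqrt 2 ∧
    (∀ k : ℝ, k ≠ 0 → 0 < deriv ω k ∧ deriv ω k < Real.sqrt 2) ∧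
    (∀ k₀ : ℝ, 0 < k₀ → ∀ j : ℝ, (j = 1 ∨ j = -1) →
      deriv ω k₀ - j * deriv ω 0 ≠ 0) := by
  refine ⟨deriv_ω_zero, fun k hk => ⟨deriv_ω_pos k, deriv_ω_lt_sqrt_two hk⟩, ?_⟩
  rintro k₀ hk₀ j (rfl | rfl) h
  · linarith [deriv_ω_lt_sqrt_two hk₀.ne', deriv_ω_zero]
  · linarith [deriv_ω_pos k₀, deriv_ω_pos 0]
end

section
/- (Harmonic non-resonance condition) For every k₀ > 0, every integer ℓ with 2 ≤ ℓ ≤ 5, and every j ∈ {1, −1}, one has ℓ·ω(k₀) − j·ω(ℓ·k₀) ≠ 0. -/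
theorem qhat_strictAntiOn : StrictAntiOn qhat (Set.Ici 0) := by
  intro a ha b _ hab
  have hsq : a ^ 2 < b ^ 2 := pow_lt_pow_left₀ hab ha two_ne_zero
  refine Real.sqrt_lt_sqrt (by positivity) ?_
  rw [div_lt_div_iff₀ (by positivity) (by positivity)]
  linarith

theorem stmt2 (k₀ : ℝ) (hk₀ : 0 < k₀) (ℓ : ℤ) (h2 : 2 ≤ ℓ) (h5 : ℓ ≤ 5)
    (j : ℝ) (hj : j = 1 ∨ j = -1) :
    (ℓ : ℝ) * ω k₀ - j * ω ((ℓ : ℝ) * k₀) ≠ 0 := by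
  have hℓ : (2 : ℝ) ≤ ℓ := by exact_mod_cast h2
  have hℓk : 0 < (ℓ : ℝ) * k₀ := by positivity
  have hlt : qhat (ℓ * k₀) < qhat k₀ :=
    qhat_strictAntiOn hk₀.le hℓk.le (by nlinarith)
  have hω : ω (ℓ * k₀) < ℓ * ω k₀ := by
    have := mul_lt_mul_of_pos_left hlt hℓk
    unfold ω
    linarith
  have hω_pos : 0 < ω (ℓ * k₀) := mul_pos hℓk (qhat_pos _)
  rcases hj with rfl | rfl
  · exact ne_of_gt (by linarith)
  · exact ne_of_gt (by linarith)
end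

section
/- (Interaction non-resonance condition) For every k₀ > 0, every j ∈ {1, −1}, and all nonzero integers ℓ₁, ℓ₂ with |ℓ₁| + |ℓ₂| ≤ 5, one has (ℓ₁ − ℓ₂)·ω(k₀) − j·ω((ℓ₁ + ℓ₂)·k₀) ≠ 0. -/
theorem omega_sq (k : ℝ) : ω k ^ 2 = k ^ 2 * ((2 + k ^ 2) / (1 + k ^ 2)) := by
  rw [ω, qhat, mul_pow, Real.sq_sqrt (by positivity)]

/-- The squared resonance relation `d ω(k) = ± ω(s k)` with denominators cleared. -/
theorem resonance_polynomial {k d s j : ℝ} (hk : 0 < k) (hj : j = 1 ∨ j = -1)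
    (h : d * ω k - j * ω (s * k) = 0) :
    d ^ 2 * ((2 + k ^ 2) * (1 + s ^ 2 * k ^ 2)) =
      s ^ 2 * ((2 + s ^ 2 * k ^ 2) * (1 + k ^ 2)) := by
  have hj2 : j ^ 2 = 1 := by rcases hj with rfl | rfl <;> norm_num
  have hsq : d ^ 2 * ω k ^ 2 = ω (s * k) ^ 2 := by
    rw [← mul_pow, sub_eq_zero.mp h, mul_pow, hj2, one_mul]
  rw [omega_sq, omega_sq, mul_pow] at hsq
  have h1 : 1 + k ^ 2 ≠ 0 := by positivity
  have h2 : 1 + s ^ 2 * k ^ 2 ≠ 0 := by positivity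
  have hk2 : k ^ 2 ≠ 0 := by positivity
  apply mul_left_cancel₀ hk2
  field_simp at hsq
  linear_combination k ^ 2 * hsq

/-- With `d = a - b` and `s = a + b`, either `d² > s²` or `d² ≤ s² / 2` with `s ≠ 0`. -/
theorem sq_sub_sq_add_gap {a b : ℤ} (ha : a ≠ 0) (hb : b ≠ 0) (h : |a| + |b| ≤ 5) :
    (a + b) ^ 2 < (a - b) ^ 2 ∧ ((a + b) ^ 2 = 0 ∨ 1 ≤ (a + b) ^ 2) ∨
      2 * (a - b) ^ 2 ≤ (a + b) ^ 2 ∧ 1 ≤ (a + b) ^ 2 := by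
  have ha5 : |a| ≤ 5 := by linarith [abs_nonneg b]
  have hb5 : |b| ≤ 5 := by linarith [abs_nonneg a]
  obtain ⟨ha1, ha2⟩ := abs_le.mp ha5
  obtain ⟨hb1, hb2⟩ := abs_le.mp hb5
  interval_cases a <;> interval_cases b <;> simp_all

theorem stmt3 (k₀ : ℝ) (hk₀ : 0 < k₀) (j : ℝ) (hj : j = 1 ∨ j = -1)
    (ℓ₁ ℓ₂ : ℤ) (h₁ : ℓ₁ ≠ 0) (h₂ : ℓ₂ ≠ 0) (h : |ℓ₁| + |ℓ₂| ≤ 5) :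
    ((ℓ₁ : ℝ) - (ℓ₂ : ℝ)) * ω k₀ - j * ω (((ℓ₁ : ℝ) + (ℓ₂ : ℝ)) * k₀) ≠ 0 := by
  intro hres
  have hpoly := resonance_polynomial hk₀ hj hres
  have hgap : ((ℓ₁ : ℝ) + ℓ₂) ^ 2 < ((ℓ₁ : ℝ) - ℓ₂) ^ 2 ∧
      (((ℓ₁ : ℝ) + ℓ₂) ^ 2 = 0 ∨ 1 ≤ ((ℓ₁ : ℝ) + ℓ₂) ^ 2) ∨
      2 * ((ℓ₁ : ℝ) - ℓ₂) ^ 2 ≤ ((ℓ₁ : ℝ) + ℓ₂) ^ 2 ∧ 1 ≤ ((ℓ₁ : ℝ) + ℓ₂) ^ 2 := by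
    exact_mod_cast sq_sub_sq_add_gap h₁ h₂ h
  have hx : 0 < k₀ ^ 2 := by positivity
  generalize ((ℓ₁ : ℝ) + ℓ₂) ^ 2 = S at hpoly hgap
  generalize ((ℓ₁ : ℝ) - ℓ₂) ^ 2 = D at hpoly hgap
  generalize k₀ ^ 2 = x at hpoly hx
  rcases hgap with ⟨hSD, rfl | hS⟩ | ⟨hDS, hS⟩
  · have : 0 < D * ((2 + x) * (1 + 0 * x)) := by positivity
    linarith
  · have hle : (2 + S * x) * (1 + x) ≤ (2 + x) * (1 + S * x) := by
      nlinarith [mul_nonneg (sub_nonneg.mpr hS) hx.le]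
    have hpos : 0 < (2 + x) * (1 + S * x) := by positivity
    have hlt := mul_lt_mul_of_pos_right hSD hpos
    have := mul_le_mul_of_nonneg_left hle (by linarith : 0 ≤ S)
    linarith
  · have hlt : (2 + x) * (1 + S * x) < 2 * ((2 + S * x) * (1 + x)) := by
      have : 0 < S * x * x := by positivity
      nlinarith
    have hpos : 0 < (2 + x) * (1 + S * x) := by positivity
    have hle := mul_le_mul_of_nonneg_right hDS hpos.le
    have := mul_lt_mul_of_pos_left hlt (by linarith : 0 < S)
    linarith
end

section
/- (Trivial resonance lower bound near k = 0) For every k₀ > 0 and every j, ε ∈ {1, −1} there exist δ > 0 and C > 0 such that for all k, m ∈ ℝ with |k| ≤ δ and |m − k₀| ≤ δ one has |j·ω(k) − ε·(ω(k − m) + ω(m))| ≥ C·|k|. -/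
theorem qhat_nonneg (x : ℝ) : 0 ≤ qhat x := Real.sqrt_nonneg _

theorem ratio_lt_ratio {x y : ℝ} (h : |x| < |y|) :
    (2 + y ^ 2) / (1 + y ^ 2) < (2 + x ^ 2) / (1 + x ^ 2) := by
  have hsq : x ^ 2 < y ^ 2 := sq_lt_sq.mpr h
  rw [div_lt_div_iff₀ (by positivity) (by positivity)]
  nlinarith

theorem qhat_lt_qhat {x y : ℝ} (h : |x| < |y|) : qhat y < qhat x :=
  Real.sqrt_lt_sqrt (by positivity) (ratio_lt_ratio h)

theorem qhat_le_qhat {x y : ℝ} (h : |x| ≤ |y|) : qhat y ≤ qhat x := by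
  rcases h.lt_or_eq with h | h
  · exact (qhat_lt_qhat h).le
  · rw [qhat, qhat, sq_eq_sq_iff_abs_eq_abs x y |>.mpr h]

theorem ω_neg (x : ℝ) : ω (-x) = -ω x := by
  simp [ω, qhat]

theorem ω_sq (x : ℝ) : ω x ^ 2 = x ^ 2 + 1 - 1 / (1 + x ^ 2) := by
  rw [ω, mul_pow, qhat, Real.sq_sqrt (by positivity)]
  field_simp
  ring

theorem ω_le_ω {x y : ℝ} (hy : 0 ≤ y) (hyx : y ≤ x) : ω y ≤ ω x := by
  have hx : 0 ≤ ω x := mul_nonneg (hy.trans hyx) (qhat_nonneg x)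
  refine le_of_sq_le_sq ?_ hx
  have hsq : y ^ 2 ≤ x ^ 2 := by gcongr
  have hinv : 1 / (1 + x ^ 2) ≤ 1 / (1 + y ^ 2) := by gcongr
  rw [ω_sq, ω_sq]
  linarith

/-- On `[a, ∞)` with `0 ≤ a`, the function `ω` is Lipschitz with constant `qhat a`. -/
theorem abs_ω_sub_ω_le {a x y : ℝ} (ha : 0 ≤ a) (hx : a ≤ x) (hy : a ≤ y) :
    |ω x - ω y| ≤ qhat a * |x - y| := by
  wlog hyx : y ≤ x generalizing x y
  · rw [abs_sub_comm, abs_sub_comm x]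
    exact this hy hx (le_of_not_ge hyx)
  have hy0 : 0 ≤ y := ha.trans hy
  have hx0 : 0 ≤ x := ha.trans hx
  rw [abs_of_nonneg (sub_nonneg.mpr (ω_le_ω hy0 hyx)), abs_of_nonneg (sub_nonneg.mpr hyx)]
  have hqxy : qhat x ≤ qhat y :=
    qhat_le_qhat (by rwa [abs_of_nonneg hy0, abs_of_nonneg hx0])
  have hqya : qhat y ≤ qhat a :=
    qhat_le_qhat (by rwa [abs_of_nonneg ha, abs_of_nonneg hy0])
  calc ω x - ω y ≤ x * qhat y - y * qhat y :=
        sub_le_sub_right (mul_le_mul_of_nonneg_left hqxy hx0) _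
    _ = qhat y * (x - y) := by ring
    _ ≤ qhat a * (x - y) := mul_le_mul_of_nonneg_right hqya (sub_nonneg.mpr hyx)

theorem qhat_mul_abs_le_abs_ω {δ k : ℝ} (hk : |k| ≤ δ) : qhat δ * |k| ≤ |ω k| := by
  rw [ω, abs_mul, abs_of_nonneg (qhat_nonneg k), mul_comm]
  exact mul_le_mul_of_nonneg_left (qhat_le_qhat (hk.trans (le_abs_self δ))) (abs_nonneg k)

theorem stmt5 (k₀ : ℝ) (hk₀ : 0 < k₀) (j ε : ℝ)
    (hj : j = 1 ∨ j = -1) (hε : ε = 1 ∨ ε = -1) :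
    ∃ δ > (0 : ℝ), ∃ C > (0 : ℝ), ∀ k m : ℝ, |k| ≤ δ → |m - k₀| ≤ δ →
      C * |k| ≤ |j * ω k - ε * (ω (k - m) + ω m)| := by
  have habs : ∀ {s : ℝ}, s = 1 ∨ s = -1 → |s| = 1 := by
    rintro s (rfl | rfl) <;> simp
  have hgap : qhat (k₀ / 2) < qhat (k₀ / 4) :=
    qhat_lt_qhat (by rw [abs_of_pos (by positivity), abs_of_pos (by positivity)]; linarith)
  refine ⟨k₀ / 4, by positivity, qhat (k₀ / 4) - qhat (k₀ / 2), sub_pos.mpr hgap, ?_⟩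
  intro k m hk hm
  have hk' := abs_le.mp hk
  have hm' := abs_le.mp hm
  have hlow : qhat (k₀ / 4) * |k| ≤ |ω k| := qhat_mul_abs_le_abs_ω hk
  have hup : |ω (k - m) + ω m| ≤ qhat (k₀ / 2) * |k| := by
    have hlip := abs_ω_sub_ω_le (a := k₀ / 2) (x := m) (y := m - k)
      (by positivity) (by linarith) (by linarith)
    rwa [sub_sub_cancel, sub_eq_add_neg, ← ω_neg, neg_sub, add_comm] at hlip
  have htri := abs_sub_abs_le_abs_sub (j * ω k) (ε * (ω (k - m) + ω m))
  rw [abs_mul, abs_mul, habs hj, habs hε, one_mul, one_mul] at htri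
  linarith
end

section
/- (Asymptotics of the same-mode quadratic kernel) For every κ ∈ ℝ and all j, σ ∈ {1, −1} there exists C > 0 such that for every k ∈ ℝ one has |ζ^σ_{j,j}(k, κ, k−κ) − 2σ·q̂(κ)| ≤ C/(1+k²). In particular ζ^σ_{j,j}(k, κ, k−κ) → 2σ·q̂(κ) as |k| → ∞, with error of order O(|k|⁻²). -/
/-- The quadratic interaction kernel ζ^σ_{j,p}(k, κ, m) of the diagonalized
ion Euler–Poisson system. -/
noncomputable def ζ (σ j p : ℝ) (k κ m : ℝ) : ℝ :=
  p * qhat m + σ * qhat κ + σ * (j * p / qhat k) * qhat κ * qhat m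
    - j / qhat k - j / (qhat k * (1 + k ^ 2) * (1 + κ ^ 2) * (1 + m ^ 2))

lemma one_le_qhat (k : ℝ) : 1 ≤ qhat k := by
  rw [qhat, Real.one_le_sqrt, one_le_div (by positivity)]
  linarith

lemma qhat_le_one_add_inv (k : ℝ) : qhat k ≤ 1 + 1 / (1 + k ^ 2) := by
  have hk : 0 < 1 / (1 + k ^ 2) := by positivity
  have h : (2 + k ^ 2) / (1 + k ^ 2) = 1 + 1 / (1 + k ^ 2) := by
    field_simp
    ring
  rw [qhat, h]
  exact Real.sqrt_le_iff.mpr ⟨by positivity, by nlinarith⟩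

lemma qhat_le_two (k : ℝ) : qhat k ≤ 2 := by
  have h : 1 / (1 + k ^ 2) ≤ 1 := by
    rw [div_le_one (by positivity)]
    nlinarith [sq_nonneg k]
  linarith [qhat_le_one_add_inv k]

lemma one_div_one_add_sub_sq_le (k κ : ℝ) :
    1 / (1 + (k - κ) ^ 2) ≤ 2 * (1 + κ ^ 2) * (1 / (1 + k ^ 2)) := by
  rw [mul_one_div, div_le_div_iff₀ (by positivity) (by positivity)]
  nlinarith [sq_nonneg (k - 2 * κ), sq_nonneg (κ * (k - κ)), sq_nonneg κ]

theorem stmt11 (κ : ℝ) (j σ : ℝ) (hj : j = 1 ∨ j = -1) (hσ : σ = 1 ∨ σ = -1) :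
    ∃ C > (0 : ℝ), ∀ k : ℝ,
      |ζ σ j j k κ (k - κ) - 2 * σ * qhat κ| ≤ C / (1 + k ^ 2) := by
  refine ⟨4 + 6 * (1 + κ ^ 2), by positivity, fun k => ?_⟩
  have hqk := one_le_qhat k
  have hqk' := qhat_le_one_add_inv k
  have hqm := one_le_qhat (k - κ)
  have hqm' := qhat_le_one_add_inv (k - κ)
  have hqκ := one_le_qhat κ
  have hqκ' := qhat_le_two κ
  have hm := one_div_one_add_sub_sq_le k κ
  have ha : 0 < 1 / (1 + k ^ 2) := by positivity
  have hq0 : 0 < qhat k := by linarith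
  have habs_j : |j| = 1 := by rcases hj with rfl | rfl <;> simp
  have habs_σ : |σ| = 1 := by rcases hσ with rfl | rfl <;> simp
  have hjj : j * j = 1 := by rcases hj with rfl | rfl <;> norm_num
  have hsplit : ζ σ j j k κ (k - κ) - 2 * σ * qhat κ =
      j * (qhat (k - κ) - 1 / qhat k) + σ * (qhat κ * ((qhat (k - κ) - qhat k) / qhat k))
        - j * (1 / (qhat k * (1 + k ^ 2) * (1 + κ ^ 2) * (1 + (k - κ) ^ 2))) := by
    rw [ζ, hjj]
    field_simp
    ring
  set a := 1 / (1 + k ^ 2) with ha_def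
  set b := 1 / (1 + (k - κ) ^ 2)
  have hinv : 1 - a ≤ 1 / qhat k := by
    rw [le_div_iff₀ hq0]
    nlinarith
  have hinv' : 1 / qhat k ≤ 1 := by rwa [div_le_one hq0]
  have hfirst : |j * (qhat (k - κ) - 1 / qhat k)| ≤ a + b := by
    rw [abs_mul, habs_j, one_mul, abs_le]
    constructor <;> linarith
  have hquot : |(qhat (k - κ) - qhat k) / qhat k| ≤ a + b := by
    rw [abs_div, abs_of_pos hq0]
    refine (div_le_self (abs_nonneg _) hqk).trans ?_
    rw [abs_le]
    constructor <;> linarith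
  have hsecond : |σ * (qhat κ * ((qhat (k - κ) - qhat k) / qhat k))| ≤ 2 * (a + b) := by
    rw [abs_mul, habs_σ, one_mul, abs_mul, abs_of_pos (by linarith : 0 < qhat κ)]
    exact mul_le_mul hqκ' hquot (abs_nonneg _) zero_le_two
  have hthird :
      |j * (1 / (qhat k * (1 + k ^ 2) * (1 + κ ^ 2) * (1 + (k - κ) ^ 2)))| ≤ a := by
    rw [abs_mul, habs_j, one_mul, abs_of_pos (by positivity)]
    refine one_div_le_one_div_of_le (by positivity) ?_
    have hκ1 : 1 ≤ 1 + κ ^ 2 := by linarith [sq_nonneg κ]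
    have hm1 : 1 ≤ 1 + (k - κ) ^ 2 := by linarith [sq_nonneg (k - κ)]
    calc 1 + k ^ 2 ≤ qhat k * (1 + k ^ 2) := le_mul_of_one_le_left (by positivity) hqk
      _ ≤ qhat k * (1 + k ^ 2) * (1 + κ ^ 2) := le_mul_of_one_le_right (by positivity) hκ1
      _ ≤ _ := le_mul_of_one_le_right (by positivity) hm1
  have hC : (4 + 6 * (1 + κ ^ 2)) / (1 + k ^ 2) = (4 + 6 * (1 + κ ^ 2)) * a := by
    rw [ha_def, mul_one_div]
  rw [hsplit, hC]
  refine (abs_sub _ _).trans ?_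
  have := abs_add_le (j * (qhat (k - κ) - 1 / qhat k))
    (σ * (qhat κ * ((qhat (k - κ) - qhat k) / qhat k)))
  linarith
end

section
/- Let c_g > 0, let F⁺ : ℝ → ℝ be continuously differentiable, and let F⁻ : ℝ → ℝ be continuous. Define h : ℝ × ℝ → ℝ by h(T, X) = (1/(2c_g))·F⁺(X + c_g T)·∫_{X − c_g T}^{X + c_g T} (F⁻(τ))² dτ. Then h(0, X) = 0 for every X ∈ ℝ, h is differentiable in T and X, and for all (T, X) ∈ ℝ × ℝ one has ∂_T h(T, X) − c_g·∂_X h(T, X) = F⁺(X + c_g T)·(F⁻(X − c_g T))². -/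
/-- Explicit solution of the transport problem
`[∂_T − c_g ∂_X] h = F⁺(X + c_g T)·(F⁻(X − c_g T))²`, `h|_{T=0} = 0`. -/
noncomputable def hsol (cg : ℝ) (Fp Fm : ℝ → ℝ) (T X : ℝ) : ℝ :=
  (1 / (2 * cg)) * Fp (X + cg * T) * ∫ τ in (X - cg * T)..(X + cg * T), (Fm τ) ^ 2

/-- Product and Leibniz rule for `s ↦ k * F (b s) * ∫ τ in a s..b s, f τ`. -/
theorem hasDerivAt_const_mul_comp_mul_intervalIntegral {F f a b : ℝ → ℝ} {k a' b' s : ℝ}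
    (hF : DifferentiableAt ℝ F (b s)) (hf : Continuous f)
    (ha : HasDerivAt a a' s) (hb : HasDerivAt b b' s) :
    HasDerivAt (fun r => k * F (b r) * ∫ τ in a r..b r, f τ)
      (k * (deriv F (b s) * b') * (∫ τ in a s..b s, f τ)
        + k * F (b s) * (f (b s) * b' - f (a s) * a')) s := by
  have hprim (x : ℝ) : HasDerivAt (fun u => ∫ τ in (0 : ℝ)..u, f τ) (f x) x :=
    hf.integral_hasStrictDerivAt 0 x |>.hasDerivAt
  have hsplit (r : ℝ) :
      ∫ τ in a r..b r, f τ = (∫ τ in (0 : ℝ)..b r, f τ) - ∫ τ in (0 : ℝ)..a r, f τ :=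
    (intervalIntegral.integral_interval_sub_left
      (hf.intervalIntegrable _ _) (hf.intervalIntegrable _ _)).symm
  simp only [hsplit]
  exact ((hF.hasDerivAt.comp s hb).const_mul k).mul
    (((hprim (b s)).comp s hb).sub ((hprim (a s)).comp s ha))

theorem stmt13 (cg : ℝ) (hcg : 0 < cg) (Fp Fm : ℝ → ℝ)
    (hFp : ContDiff ℝ 1 Fp) (hFm : Continuous Fm) :
    (∀ X : ℝ, hsol cg Fp Fm 0 X = 0) ∧
    (∀ T X : ℝ, DifferentiableAt ℝ (fun t => hsol cg Fp Fm t X) T ∧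
      DifferentiableAt ℝ (fun x => hsol cg Fp Fm T x) X) ∧
    (∀ T X : ℝ,
      deriv (fun t => hsol cg Fp Fm t X) T
        - cg * deriv (fun x => hsol cg Fp Fm T x) X
      = Fp (X + cg * T) * (Fm (X - cg * T)) ^ 2) := by
  have hdiff : Differentiable ℝ Fp := hFp.differentiable one_ne_zero
  have hsq : Continuous fun τ => Fm τ ^ 2 := hFm.pow 2
  have hT (T X : ℝ) := hasDerivAt_const_mul_comp_mul_intervalIntegral (k := 1 / (2 * cg))
    (hdiff _) hsq
    (((hasDerivAt_id T).const_mul cg).const_sub X) (((hasDerivAt_id T).const_mul cg).const_add X)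
  have hX (T X : ℝ) := hasDerivAt_const_mul_comp_mul_intervalIntegral (k := 1 / (2 * cg))
    (hdiff _) hsq
    ((hasDerivAt_id X).sub_const (cg * T)) ((hasDerivAt_id X).add_const (cg * T))
  refine ⟨fun X => by simp [hsol], fun T X => ⟨(hT T X).differentiableAt,
    (hX T X).differentiableAt⟩, fun T X => ?_⟩
  have hderivT := (hT T X).deriv
  have hderivX := (hX T X).deriv
  simp only [id_eq] at hderivT hderivX
  simp only [hsol]
  rw [hderivT, hderivX]
  field_simp
  ring
end

section
/- Let c_g > 0 and let F⁺, F⁻ : ℝ → ℝ be measurable functions with (F⁺)² and (F⁻)² integrable on ℝ. Define h(T, X) = (1/(2c_g))·F⁺(X + c_g T)·∫_{X − c_g T}^{X + c_g T} (F⁻(τ))² dτ. Then for every T ∈ ℝ the function X ↦ h(T, X)² is integrable and ∫_ℝ h(T, X)² dX ≤ (1/(2c_g))²·(∫_ℝ (F⁺(x))² dx)·(∫_ℝ (F⁻(x))² dx)². -/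
open MeasureTheory

/-- The integral of an integrable function over a window with continuously moving endpoints
depends continuously on the parameter. -/
theorem continuous_intervalIntegral_of_integrable {f a b : ℝ → ℝ} (hf : Integrable f)
    (ha : Continuous a) (hb : Continuous b) : Continuous fun x => ∫ t in (a x)..(b x), f t := by
  have hP := intervalIntegral.continuous_primitive (fun _ _ => hf.intervalIntegrable) 0
  have h : (fun x => ∫ t in (a x)..(b x), f t) =
      fun x => (∫ t in (0 : ℝ)..(b x), f t) - ∫ t in (0 : ℝ)..(a x), f t := by
    funext x
    exact (intervalIntegral.integral_interval_sub_left hf.intervalIntegrable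
      hf.intervalIntegrable).symm
  rw [h]
  exact (hP.comp hb).sub (hP.comp ha)

theorem abs_intervalIntegral_le_integral {f : ℝ → ℝ} (hf : Integrable f) (hf0 : ∀ x, 0 ≤ f x)
    (a b : ℝ) : |∫ t in a..b, f t| ≤ ∫ t, f t := by
  rw [intervalIntegral.abs_intervalIntegral_eq, abs_of_nonneg (integral_nonneg hf0)]
  exact setIntegral_le_integral hf (Filter.Eventually.of_forall hf0)

theorem stmt14 (cg : ℝ) (hcg : 0 < cg) (Fp Fm : ℝ → ℝ)
    (hFpm : Measurable Fp) (hFmm : Measurable Fm)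
    (hFp2 : Integrable (fun x => (Fp x) ^ 2))
    (hFm2 : Integrable (fun x => (Fm x) ^ 2)) (T : ℝ) :
    Integrable (fun X => (hsol cg Fp Fm T X) ^ 2) ∧
    ∫ X, (hsol cg Fp Fm T X) ^ 2 ≤
      (1 / (2 * cg)) ^ 2 * (∫ x, (Fp x) ^ 2) * (∫ x, (Fm x) ^ 2) ^ 2 := by
  have hbound : ∀ X, hsol cg Fp Fm T X ^ 2 ≤
      (1 / (2 * cg)) ^ 2 * Fp (X + cg * T) ^ 2 * (∫ x, Fm x ^ 2) ^ 2 := by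
    intro X
    rw [hsol, mul_pow, mul_pow, ← sq_abs (∫ τ in _.._, Fm τ ^ 2)]
    gcongr
    exact abs_intervalIntegral_le_integral hFm2 (fun x => sq_nonneg _) _ _
  have hmaj : Integrable fun X =>
      (1 / (2 * cg)) ^ 2 * Fp (X + cg * T) ^ 2 * (∫ x, Fm x ^ 2) ^ 2 :=
    ((hFp2.comp_add_right (cg * T)).const_mul _).mul_const _
  have hmeas : Measurable (hsol cg Fp Fm T) :=
    ((hFpm.comp (measurable_id.add_const _)).const_mul _).mul
      (continuous_intervalIntegral_of_integrable hFm2 (by fun_prop) (by fun_prop)).measurable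
  have hint : Integrable fun X => hsol cg Fp Fm T X ^ 2 :=
    hmaj.mono' (hmeas.pow_const 2).aestronglyMeasurable
      (Filter.Eventually.of_forall fun X => by
        rw [Real.norm_of_nonneg (sq_nonneg _)]
        exact hbound X)
  refine ⟨hint, (integral_mono hint hmaj hbound).trans_eq ?_⟩
  rw [integral_mul_const, integral_const_mul,
    integral_add_right_eq_self (fun x => Fp x ^ 2) (cg * T)]
end

section
/- (Sobolev estimate of Lemma 3.3) Let s ≥ 1 be a natural number and c_g > 0. There exists a constant C > 0, depending only on c_g and s, with the following property: whenever F⁺, F⁻ : ℝ → ℝ are s-times continuously differentiable and for every natural j ≤ s the j-th iterated derivatives of F⁺ and F⁻ are square-integrable on ℝ, the function h(T, X) = (1/(2c_g))·F⁺(X + c_g T)·∫_{X − c_g T}^{X + c_g T} (F⁻(τ))² dτ satisfies, for every T ∈ ℝ, Σ_{j=0}^{s} ∫_ℝ (∂_X^j h(T, X))² dX ≤ C·(Σ_{j=0}^{s} ∫_ℝ (iteratedDeriv j F⁺ (x))² dx)·(Σ_{j=0}^{s} ∫_ℝ (iteratedDeriv j F⁻ (x))² dx)². -/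
open MeasureTheory

/-- The squared Sobolev norm of order `s` of a function on the real line. -/
noncomputable def sobolevSq (s : ℕ) (f : ℝ → ℝ) : ℝ :=
  ∑ j ∈ Finset.range (s + 1), ∫ x, (iteratedDeriv j f x) ^ 2

lemma sobolevSq_nonneg (s : ℕ) (f : ℝ → ℝ) : 0 ≤ sobolevSq s f :=
  Finset.sum_nonneg fun _ _ => integral_nonneg fun _ => sq_nonneg _

lemma integral_iteratedDeriv_sq_le_sobolevSq {s j : ℕ} (hj : j ≤ s) (f : ℝ → ℝ) :
    ∫ x, (iteratedDeriv j f x) ^ 2 ≤ sobolevSq s f :=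
  Finset.single_le_sum (f := fun j => ∫ x, (iteratedDeriv j f x) ^ 2)
    (fun _ _ => integral_nonneg fun _ => sq_nonneg _) (Finset.mem_range.2 (by omega))

/-- One-dimensional Sobolev embedding: the supremum is controlled by the first-order norm. -/
lemma sq_le_integral_sq_add_integral_deriv_sq {f : ℝ → ℝ} (hf : ContDiff ℝ 1 f)
    (hi : Integrable fun x => f x ^ 2) (hi' : Integrable fun x => deriv f x ^ 2) (x : ℝ) :
    f x ^ 2 ≤ (∫ y, f y ^ 2) + ∫ y, deriv f y ^ 2 := by
  have hcont : Continuous (deriv f) := hf.continuous_deriv le_rfl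
  have hderiv (y : ℝ) : HasDerivAt (fun y => f y ^ 2) (2 * f y * deriv f y) y := by
    simpa using ((hf.differentiable one_ne_zero) y).hasDerivAt.fun_pow 2
  have hbound (y : ℝ) : |2 * f y * deriv f y| ≤ f y ^ 2 + deriv f y ^ 2 := by
    rw [abs_le]
    constructor <;> nlinarith [sq_nonneg (f y + deriv f y), sq_nonneg (f y - deriv f y)]
  have hint : Integrable fun y => 2 * f y * deriv f y :=
    (hi.add hi').mono' ((continuous_const.mul hf.continuous).mul hcont).aestronglyMeasurable
      (Filter.Eventually.of_forall hbound)
  have hsum : Integrable fun y => f y ^ 2 + deriv f y ^ 2 := hi.add hi'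
  have hlim := tendsto_zero_of_hasDerivAt_of_integrableOn_Iic (a := x) (fun y _ => hderiv y)
    hint.integrableOn hi.integrableOn
  have hftc := integral_Iic_of_hasDerivAt_of_tendsto' (a := x) (fun y _ => hderiv y)
    hint.integrableOn hlim
  rw [sub_zero] at hftc
  calc f x ^ 2 = ∫ y in Set.Iic x, 2 * f y * deriv f y := hftc.symm
    _ ≤ ∫ y in Set.Iic x, (f y ^ 2 + deriv f y ^ 2) :=
      integral_mono hint.integrableOn hsum.integrableOn
        fun y => (le_abs_self _).trans (hbound y)
    _ ≤ ∫ y, (f y ^ 2 + deriv f y ^ 2) :=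
      setIntegral_le_integral hsum (Filter.Eventually.of_forall fun y => by positivity)
    _ = _ := integral_add hi hi'

lemma iteratedDeriv_sq_le_sobolevSq {s j : ℕ} (hj : j < s) {f : ℝ → ℝ} (hf : ContDiff ℝ s f)
    (hi : ∀ j ≤ s, Integrable (fun x => (iteratedDeriv j f x) ^ 2)) (x : ℝ) :
    iteratedDeriv j f x ^ 2 ≤ sobolevSq s f := by
  have hsmooth : ContDiff ℝ 1 (iteratedDeriv j f) := by
    rw [iteratedDeriv_eq_iterate]
    exact ContDiff.iterate_deriv' 1 j (hf.of_le (by exact_mod_cast (by omega : 1 + j ≤ s)))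
  have h := sq_le_integral_sq_add_integral_deriv_sq hsmooth (hi j hj.le)
    (by simpa only [iteratedDeriv_succ] using hi (j + 1) hj) x
  rw [← iteratedDeriv_succ] at h
  refine h.trans ?_
  have hsub : ({j, j + 1} : Finset ℕ) ⊆ Finset.range (s + 1) := by
    intro i
    simp only [Finset.mem_insert, Finset.mem_singleton, Finset.mem_range]
    omega
  have hle := Finset.sum_le_sum_of_subset_of_nonneg
    (f := fun i => ∫ y, (iteratedDeriv i f y) ^ 2) hsub
    fun _ _ _ => integral_nonneg fun _ => sq_nonneg _
  rwa [Finset.sum_pair (by omega)] at hle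

/-- Derivatives of a square of order below `s` are bounded by the Sobolev norm of order `s`. -/
lemma abs_iteratedDeriv_sq_le {s i : ℕ} (his : i < s) {f : ℝ → ℝ} (hf : ContDiff ℝ s f)
    (hi : ∀ j ≤ s, Integrable (fun x => (iteratedDeriv j f x) ^ 2)) (x : ℝ) :
    |iteratedDeriv i (fun y => f y ^ 2) x| ≤ 2 ^ i * sobolevSq s f := by
  have hfi : ContDiffAt ℝ i f x := (hf.of_le (by exact_mod_cast his.le)).contDiffAt
  have hmul : (fun y => f y ^ 2) = f * f := by ext y; simp [sq]
  rw [hmul, iteratedDeriv_mul hfi hfi]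
  have hchoose : (2 : ℝ) ^ i = ∑ k ∈ Finset.range (i + 1), (i.choose k : ℝ) := by
    exact_mod_cast (Nat.sum_range_choose i).symm
  rw [hchoose, Finset.sum_mul]
  refine (Finset.abs_sum_le_sum_abs _ _).trans (Finset.sum_le_sum fun k hk => ?_)
  rw [mul_assoc, abs_mul, Nat.abs_cast]
  refine mul_le_mul_of_nonneg_left ?_ (Nat.cast_nonneg _)
  have h₁ := iteratedDeriv_sq_le_sobolevSq (j := k)
    (by have := Finset.mem_range.1 hk; omega) hf hi x
  have h₂ := iteratedDeriv_sq_le_sobolevSq (j := i - k) (by omega) hf hi x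
  rw [abs_le]
  constructor <;> nlinarith [sq_nonneg (iteratedDeriv k f x + iteratedDeriv (i - k) f x),
    sq_nonneg (iteratedDeriv k f x - iteratedDeriv (i - k) f x)]

lemma hasDerivAt_windowIntegral {g : ℝ → ℝ} (hg : Continuous g) (a x : ℝ) :
    HasDerivAt (fun x => ∫ t in (x - a)..(x + a), g t) (g (x + a) - g (x - a)) x := by
  have hP (y : ℝ) : HasDerivAt (fun u => ∫ t in (0 : ℝ)..u, g t) (g y) y :=
    intervalIntegral.integral_hasDerivAt_right (hg.intervalIntegrable _ _)
      hg.stronglyMeasurable.stronglyMeasurableAtFilter hg.continuousAt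
  have heq : (fun x => ∫ t in (x - a)..(x + a), g t) =
      fun x => (∫ t in (0 : ℝ)..(x + a), g t) - ∫ t in (0 : ℝ)..(x - a), g t := by
    ext y
    exact (intervalIntegral.integral_interval_sub_left (hg.intervalIntegrable _ _)
      (hg.intervalIntegrable _ _)).symm
  rw [heq]
  exact ((hP (x + a)).comp_add_const x a).sub ((hP (x - a)).comp_sub_const x a)

lemma contDiff_windowIntegral {n : ℕ} {g : ℝ → ℝ} (hg : ContDiff ℝ n g) (a : ℝ) :
    ContDiff ℝ n fun x => ∫ t in (x - a)..(x + a), g t := by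
  have hderiv := hasDerivAt_windowIntegral hg.continuous a
  have hsucc : ContDiff ℝ (n + 1) fun x => ∫ t in (x - a)..(x + a), g t := by
    refine contDiff_succ_iff_deriv.2 ⟨fun x => (hderiv x).differentiableAt, by simp, ?_⟩
    rw [funext fun x => (hderiv x).deriv]
    fun_prop
  exact hsucc.of_le (by exact_mod_cast n.le_succ)

lemma abs_iteratedDeriv_windowIntegral_sq_le {s i : ℕ} (his : i ≤ s) {f : ℝ → ℝ}
    (hf : ContDiff ℝ s f)
    (hi : ∀ j ≤ s, Integrable (fun x => (iteratedDeriv j f x) ^ 2)) (a x : ℝ) :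
    |iteratedDeriv i (fun x => ∫ t in (x - a)..(x + a), f t ^ 2) x| ≤ 2 ^ i * sobolevSq s f := by
  cases i with
  | zero =>
    have h₀ : Integrable fun x => f x ^ 2 := by simpa using hi 0 (Nat.zero_le _)
    have hle : ∫ y, f y ^ 2 ≤ sobolevSq s f := by
      simpa using integral_iteratedDeriv_sq_le_sobolevSq (Nat.zero_le s) f
    simp only [iteratedDeriv_zero, pow_zero, one_mul]
    refine le_trans ?_ hle
    rw [intervalIntegral.abs_intervalIntegral_eq,
      abs_of_nonneg (integral_nonneg fun _ => sq_nonneg _)]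
    exact setIntegral_le_integral h₀ (Filter.Eventually.of_forall fun y => sq_nonneg _)
  | succ k =>
    have hsq : ContDiff ℝ s fun y => f y ^ 2 := hf.pow 2
    have hfk : ContDiff ℝ k f := hf.of_le (by exact_mod_cast (by omega : k ≤ s))
    have hk (y : ℝ) := abs_le.1 (abs_iteratedDeriv_sq_le (i := k) (by omega) hf hi y)
    rw [iteratedDeriv_succ', funext fun x => (hasDerivAt_windowIntegral hsq.continuous a x).deriv,
      iteratedDeriv_fun_sub (by fun_prop) (by fun_prop),
      iteratedDeriv_comp_add_const (f := fun y => f y ^ 2),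
      iteratedDeriv_comp_sub_const (f := fun y => f y ^ 2), pow_succ, abs_le]
    have h₁ := hk (x + a)
    have h₂ := hk (x - a)
    constructor <;> linarith [h₁.1, h₁.2, h₂.1, h₂.2]

lemma iteratedDeriv_hsol_sq_le {s j : ℕ} (hj : j ≤ s) (cg : ℝ) {Fp Fm : ℝ → ℝ}
    (hp : ContDiff ℝ s Fp) (hm : ContDiff ℝ s Fm)
    (him : ∀ j ≤ s, Integrable (fun x => (iteratedDeriv j Fm x) ^ 2)) (T X : ℝ) :
    iteratedDeriv j (fun X => hsol cg Fp Fm T X) X ^ 2 ≤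
      (1 / (2 * cg) * (2 ^ s * 2 ^ s * sobolevSq s Fm)) ^ 2 * ((s + 1 : ℕ) *
        ∑ i ∈ Finset.range (s + 1), iteratedDeriv i Fp (X + cg * T) ^ 2) := by
  have hjs : (j : WithTop ℕ∞) ≤ s := by exact_mod_cast hj
  have hpj : ContDiff ℝ j fun X => Fp (X + cg * T) :=
    (hp.of_le hjs).comp (contDiff_id.add contDiff_const)
  have hmj := contDiff_windowIntegral ((hm.of_le hjs).pow 2) (cg * T)
  have hN := sobolevSq_nonneg s Fm
  have hleibniz : |iteratedDeriv j ((fun X => Fp (X + cg * T)) *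
      fun X => ∫ τ in (X - cg * T)..(X + cg * T), Fm τ ^ 2) X| ≤
      (2 ^ s * 2 ^ s * sobolevSq s Fm) *
        ∑ i ∈ Finset.range (s + 1), |iteratedDeriv i Fp (X + cg * T)| := by
    rw [iteratedDeriv_mul hpj.contDiffAt hmj.contDiffAt, Finset.mul_sum]
    refine (Finset.abs_sum_le_sum_abs _ _).trans ((Finset.sum_le_sum fun i hi => ?_).trans
      (Finset.sum_le_sum_of_subset_of_nonneg (Finset.range_mono (by omega))
        fun _ _ _ => by positivity))
    rw [iteratedDeriv_comp_add_const, abs_mul, abs_mul, Nat.abs_cast]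
    have hchoose : (j.choose i : ℝ) ≤ 2 ^ s := by
      exact_mod_cast (Nat.choose_le_two_pow j i).trans (Nat.pow_le_pow_right two_pos hj)
    have hwin : |iteratedDeriv (j - i)
        (fun X => ∫ τ in (X - cg * T)..(X + cg * T), Fm τ ^ 2) X| ≤ 2 ^ s * sobolevSq s Fm :=
      (abs_iteratedDeriv_windowIntegral_sq_le (by omega) hm him _ _).trans (by
        gcongr
        · norm_num
        · omega)
    calc _ ≤ 2 ^ s * |iteratedDeriv i Fp (X + cg * T)| * (2 ^ s * sobolevSq s Fm) := by gcongr
      _ = _ := by ring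
  have hfactor : (fun X => hsol cg Fp Fm T X) = fun X => 1 / (2 * cg) *
      ((fun X => Fp (X + cg * T)) *
        fun X => ∫ τ in (X - cg * T)..(X + cg * T), Fm τ ^ 2) X := by
    ext Y
    simp only [hsol, Pi.mul_apply, mul_assoc]
  rw [hfactor, iteratedDeriv_const_mul_field, mul_pow, mul_pow, mul_assoc]
  refine mul_le_mul_of_nonneg_left ?_ (sq_nonneg _)
  rw [← sq_abs]
  refine (pow_le_pow_left₀ (abs_nonneg _) hleibniz 2).trans ?_
  rw [mul_pow]
  refine mul_le_mul_of_nonneg_left ?_ (sq_nonneg _)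
  simpa only [sq_abs, Finset.card_range] using sq_sum_le_card_mul_sum_sq
    (s := Finset.range (s + 1)) (f := fun i => |iteratedDeriv i Fp (X + cg * T)|)

lemma integral_iteratedDeriv_hsol_sq_le {s j : ℕ} (hj : j ≤ s) (cg : ℝ) {Fp Fm : ℝ → ℝ}
    (hp : ContDiff ℝ s Fp) (hm : ContDiff ℝ s Fm)
    (hip : ∀ j ≤ s, Integrable (fun x => (iteratedDeriv j Fp x) ^ 2))
    (him : ∀ j ≤ s, Integrable (fun x => (iteratedDeriv j Fm x) ^ 2)) (T : ℝ) :
    ∫ X, iteratedDeriv j (fun X => hsol cg Fp Fm T X) X ^ 2 ≤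
      (1 / (2 * cg) * (2 ^ s * 2 ^ s * sobolevSq s Fm)) ^ 2 *
        ((s + 1 : ℕ) * sobolevSq s Fp) := by
  have hshift (i : ℕ) (hi : i ∈ Finset.range (s + 1)) :
      Integrable fun X => iteratedDeriv i Fp (X + cg * T) ^ 2 :=
    (hip i (by have := Finset.mem_range.1 hi; omega)).comp_add_right (cg * T)
  refine (integral_mono_of_nonneg (Filter.Eventually.of_forall fun _ => sq_nonneg _)
    (((integrable_finsetSum _ hshift).const_mul _).const_mul _)
    (Filter.Eventually.of_forall fun X => iteratedDeriv_hsol_sq_le hj cg hp hm him T X)).trans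
    (le_of_eq ?_)
  rw [integral_const_mul, integral_const_mul, integral_finsetSum _ hshift]
  congr 2
  exact Finset.sum_congr rfl fun i _ =>
    integral_add_right_eq_self (fun x => iteratedDeriv i Fp x ^ 2) (cg * T)

theorem stmt16 (s : ℕ) (hs : 1 ≤ s) (cg : ℝ) (hcg : 0 < cg) :
    ∃ C > (0 : ℝ), ∀ Fp Fm : ℝ → ℝ,
      ContDiff ℝ s Fp → ContDiff ℝ s Fm →
      (∀ j ≤ s, Integrable (fun x => (iteratedDeriv j Fp x) ^ 2)) →
      (∀ j ≤ s, Integrable (fun x => (iteratedDeriv j Fm x) ^ 2)) →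
      ∀ T : ℝ,
        ∑ j ∈ Finset.range (s + 1),
            ∫ X, (iteratedDeriv j (fun X => hsol cg Fp Fm T X) X) ^ 2
          ≤ C * (∑ j ∈ Finset.range (s + 1), ∫ x, (iteratedDeriv j Fp x) ^ 2)
              * (∑ j ∈ Finset.range (s + 1), ∫ x, (iteratedDeriv j Fm x) ^ 2) ^ 2 := by
  refine ⟨(s + 1 : ℕ) ^ 2 * (1 / (2 * cg) * (2 ^ s * 2 ^ s)) ^ 2, by positivity,
    fun Fp Fm hp hm hip him T => ?_⟩
  refine (Finset.sum_le_card_nsmul _ _ _ fun j hj => integral_iteratedDeriv_hsol_sq_le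
    (Nat.lt_succ_iff.1 (Finset.mem_range.1 hj)) cg hp hm hip him T).trans (le_of_eq ?_)
  simp only [Finset.card_range, nsmul_eq_mul, sobolevSq]
  ring
end
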